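/- Let V be a 5-dimensional complex vector space and Q a quadratic form on V whose rank is 3 or 4. Let L ⊆ V be a 2-dimensional totally isotropic subspace with L ⊄ rad(Q). Then there are at most two 3-dimensional totally isotropic subspaces of Q containing L. -/

import Mathlib

/-!
Let `B` be the polar form of `Q`. All totally isotropic `W` covering `L` lie in the hyperplane
`l^⊥`, where `l ∈ L` is outside the radical, and two distinct ones `W₁`, `W₂` already span it
because `L` has codimension 3. Suppose `W₃` is a third one. A vector of `W₃` outside `L`
splits as `u + v` with `u ∈ W₁` and `v ∈ W₂`, neither in `L`, and `0 = Q (u + v) = B(u, v)`.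
Since `u` and `v` span `W₁` and `W₂` over `L`, the whole hyperplane is totally isotropic,
which forces the rank of `B` to be at most 2.
-/

open Module

section Isotropic

variable {R M N : Type*} [CommRing R] [AddCommGroup M] [AddCommGroup N] [Module R M] [Module R N]
  {Q : QuadraticMap R M N} {L W W₁ W₂ W₃ : Submodule R M}

/-- A submodule `W` is totally isotropic for a quadratic map `Q` if `Q` itself, rather than only its
polar form, vanishes on `W`; the distinction matters in characteristic 2. -/
def IsTotallyIsotropic (Q : QuadraticMap R M N) (W : Submodule R M) : Prop :=
  ∀ x ∈ W, Q x = 0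

theorem IsTotallyIsotropic.polarBilin_eq_zero (hW : IsTotallyIsotropic Q W) {x y : M}
    (hx : x ∈ W) (hy : y ∈ W) : Q.polarBilin x y = 0 := by
  simp [QuadraticMap.polar, hW x hx, hW y hy, hW _ (W.add_mem hx hy)]

theorem IsTotallyIsotropic.le_ker_polarBilin (hW : IsTotallyIsotropic Q W) {x : M} (hx : x ∈ W) :
    W ≤ LinearMap.ker (Q.polarBilin x) :=
  fun _ hy ↦ hW.polarBilin_eq_zero hx hy

theorem IsTotallyIsotropic.sup (h₁ : IsTotallyIsotropic Q W₁) (h₂ : IsTotallyIsotropic Q W₂)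
    (h : ∀ x ∈ W₁, ∀ y ∈ W₂, Q.polarBilin x y = 0) : IsTotallyIsotropic Q (W₁ ⊔ W₂) := by
  intro z hz
  obtain ⟨x, hx, y, hy, rfl⟩ := Submodule.mem_sup.1 hz
  rw [QuadraticMap.map_add Q, h₁ x hx, h₂ y hy, ← QuadraticMap.polarBilin_apply_apply, h x hx y hy]
  simp

theorem le_of_covBy_of_mem_of_notMem {P : Submodule R M} (hLW : L ⋖ W) (hLP : L ≤ P) {x : M}
    (hxW : x ∈ W) (hxL : x ∉ L) (hxP : x ∈ P) : W ≤ P := by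
  obtain h | h := hLW.eq_or_eq (le_inf hLW.le hLP) inf_le_left
  · exact absurd (h ▸ ⟨hxW, hxP⟩) hxL
  · exact inf_eq_left.1 h

theorem polarBilin_eq_zero_of_covBy (hL₁ : L ⋖ W₁) (hL₂ : L ⋖ W₂) (h₁ : IsTotallyIsotropic Q W₁)
    (h₂ : IsTotallyIsotropic Q W₂) {u v : M} (hu : u ∈ W₁) (huL : u ∉ L) (hv : v ∈ W₂)
    (hvL : v ∉ L) (huv : Q.polarBilin u v = 0) :
    ∀ x ∈ W₁, ∀ y ∈ W₂, Q.polarBilin x y = 0 := by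
  have hu₂ : W₂ ≤ LinearMap.ker (Q.polarBilin u) :=
    le_of_covBy_of_mem_of_notMem hL₂ (hL₁.le.trans (h₁.le_ker_polarBilin hu)) hv hvL huv
  intro x hx y hy
  have hLy : L ≤ LinearMap.ker (Q.polarBilin.flip y) :=
    fun a ha ↦ h₂.polarBilin_eq_zero (hL₂.le ha) hy
  exact le_of_covBy_of_mem_of_notMem hL₁ hLy hu huL (hu₂ hy) hx

theorem IsTotallyIsotropic.sup_of_covBy (hL₁ : L ⋖ W₁) (hL₂ : L ⋖ W₂) (hL₃ : L ⋖ W₃)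
    (h₁ : IsTotallyIsotropic Q W₁) (h₂ : IsTotallyIsotropic Q W₂) (h₃ : IsTotallyIsotropic Q W₃)
    (h₁₃ : W₁ ≠ W₃) (h₂₃ : W₂ ≠ W₃) (hle : W₃ ≤ W₁ ⊔ W₂) : IsTotallyIsotropic Q (W₁ ⊔ W₂) := by
  obtain ⟨w, hw, hwL⟩ := SetLike.exists_of_lt hL₃.lt
  obtain ⟨u, hu, v, hv, rfl⟩ := Submodule.mem_sup.1 (hle hw)
  have huL : u ∉ L := fun h ↦
    hwL (hL₂.wcovBy.inf_eq hL₃.wcovBy h₂₃ ▸ ⟨W₂.add_mem (hL₂.le h) hv, hw⟩)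
  have hvL : v ∉ L := fun h ↦
    hwL (hL₁.wcovBy.inf_eq hL₃.wcovBy h₁₃ ▸ ⟨W₁.add_mem hu (hL₁.le h), hw⟩)
  have huv : Q.polarBilin u v = 0 := by
    simp [QuadraticMap.polar, h₃ _ hw, h₁ u hu, h₂ v hv]
  exact h₁.sup h₂ (polarBilin_eq_zero_of_covBy hL₁ hL₂ h₁ h₂ hu huL hv hvL huv)

end Isotropic

section Dimension

variable {K V V' : Type*} [Field K] [AddCommGroup V] [Module K V] [AddCommGroup V'] [Module K V']

theorem covBy_of_finrank_eq_add_one {L W : Submodule K V} (hLW : L ≤ W)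
    (h : finrank K W = finrank K L + 1) : L ⋖ W := by
  have : FiniteDimensional K W := .of_finrank_pos (by omega)
  refine ⟨hLW.lt_of_ne (by rintro rfl; omega), fun P hLP hPW ↦ ?_⟩
  have : FiniteDimensional K P := Submodule.finiteDimensional_of_le hPW.le
  have := Submodule.finrank_lt_finrank_of_lt hLP
  have := Submodule.finrank_lt_finrank_of_lt hPW
  omega

theorem finrank_quotient_lt_of_lt {U W : Submodule K V} [FiniteDimensional K (V ⧸ U)]
    (h : U < W) : finrank K (V ⧸ W) < finrank K (V ⧸ U) := by
  have hne : W.map U.mkQ ≠ ⊥ := by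
    rw [Ne, ← le_bot_iff, Submodule.map_le_iff_le_comap, Submodule.comap_bot, Submodule.ker_mkQ]
    exact h.not_ge
  have hpos := Submodule.one_le_finrank_iff.2 hne
  have hadd := (W.map U.mkQ).finrank_quotient_add_finrank
  rw [(Submodule.quotientQuotientEquivQuotient U W h.le).finrank_eq] at hadd
  omega

theorem eq_of_le_of_lt_top_of_finrank_quotient_le_one {U H : Submodule K V}
    [FiniteDimensional K (V ⧸ U)] (hU : finrank K (V ⧸ U) ≤ 1) (hUH : U ≤ H) (hH : H < ⊤) :
    U = H := by
  refine hUH.eq_of_not_lt fun hlt ↦ ?_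
  have : FiniteDimensional K (V ⧸ H) := Submodule.CoFG.of_le hUH ‹_›
  have := finrank_quotient_lt_of_lt hlt
  have := finrank_quotient_lt_of_lt hH
  omega

theorem finrank_quotient_sup_add_two_le {L W₁ W₂ : Submodule K V} [FiniteDimensional K (V ⧸ L)]
    (h₁ : L ⋖ W₁) (h₂ : L ⋖ W₂) (hne : W₁ ≠ W₂) :
    finrank K (V ⧸ (W₁ ⊔ W₂)) + 2 ≤ finrank K (V ⧸ L) := by
  have hsup : W₁ ⋖ W₁ ⊔ W₂ :=
    CovBy.sup_of_inf_right (h₁.wcovBy.inf_eq h₂.wcovBy hne ▸ h₂)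
  have : FiniteDimensional K (V ⧸ W₁) := Submodule.CoFG.of_le h₁.le ‹_›
  have := finrank_quotient_lt_of_lt h₁.lt
  have := finrank_quotient_lt_of_lt hsup.lt
  omega

/-- `B` maps `U` into the annihilator of `U'`, and a complement of `U` has dimension `codim U`. -/
theorem rank_le_finrank_quotient_add (B : V →ₗ[K] V' →ₗ[K] K) {U : Submodule K V}
    {U' : Submodule K V'} [FiniteDimensional K (V ⧸ U)] [FiniteDimensional K (V' ⧸ U')]
    (h : ∀ x ∈ U, ∀ y ∈ U', B x y = 0) :
    B.rank ≤ (finrank K (V ⧸ U) + finrank K (V' ⧸ U') : ℕ) := by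
  obtain ⟨C, hC⟩ := U.exists_isCompl
  have : FiniteDimensional K C := (Submodule.quotientEquivOfIsCompl U C hC).finiteDimensional
  let e := U'.dualQuotEquivDualAnnihilator
  have : FiniteDimensional K U'.dualAnnihilator := e.finiteDimensional
  have hrange : LinearMap.range B ≤ C.map B ⊔ U'.dualAnnihilator := by
    rw [LinearMap.range_eq_map, ← hC.sup_eq_top, Submodule.map_sup, sup_comm]
    refine sup_le_sup_left (Submodule.map_le_iff_le_comap.2 fun x hx ↦ ?_) _
    exact (Submodule.mem_dualAnnihilator _).2 (h x hx)
  calc B.rank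
    _ ≤ Module.rank K ↥(C.map B ⊔ U'.dualAnnihilator) := Submodule.rank_mono hrange
    _ = finrank K ↥(C.map B ⊔ U'.dualAnnihilator) := (finrank_eq_rank _ _).symm
    _ ≤ (finrank K (C.map B) + finrank K U'.dualAnnihilator : ℕ) := by
      exact_mod_cast Submodule.finrank_add_le_finrank_add_finrank _ _
    _ ≤ (finrank K (V ⧸ U) + finrank K (V' ⧸ U') : ℕ) := by
      rw [(Submodule.quotientEquivOfIsCompl U C hC).finrank_eq, ← e.finrank_eq,
        Subspace.dual_finrank_eq]
      exact_mod_cast Nat.add_le_add_right (Submodule.finrank_map_le B C) _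

end Dimension

theorem at_most_two_totallyIsotropic_planes_through_line_general
    {K V : Type*} [Field K] [AddCommGroup V] [Module K V] (Q : QuadraticForm K V)
    (hrk : 2 < Q.polarBilin.rank) (L : Submodule K V) [FiniteDimensional K (V ⧸ L)]
    (hL : finrank K (V ⧸ L) ≤ 3) (hLrad : ¬ L ≤ LinearMap.ker Q.polarBilin) :
    ∃ W₁ W₂ : Submodule K V, ∀ W : Submodule K V,
      L ⋖ W → IsTotallyIsotropic Q W → W = W₁ ∨ W = W₂ := by
  by_contra! hcon
  obtain ⟨W₁, hL₁, h₁, -, -⟩ := hcon ⊥ ⊥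
  obtain ⟨W₂, hL₂, h₂, h₂₁, -⟩ := hcon W₁ W₁
  obtain ⟨W₃, hL₃, h₃, h₃₁, h₃₂⟩ := hcon W₁ W₂
  obtain ⟨l, hl, hlrad⟩ := SetLike.not_le_iff_exists.1 hLrad
  set H := LinearMap.ker (Q.polarBilin l)
  have hH : H < ⊤ := lt_top_iff_ne_top.2 fun h ↦ hlrad (LinearMap.ker_eq_top.1 h)
  have le_H {W : Submodule K V} (hLW : L ⋖ W) (hW : IsTotallyIsotropic Q W) : W ≤ H :=
    hW.le_ker_polarBilin (hLW.le hl)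
  have : FiniteDimensional K (V ⧸ (W₁ ⊔ W₂)) :=
    Submodule.CoFG.of_le (hL₁.le.trans le_sup_left) ‹_›
  have hcodim : finrank K (V ⧸ (W₁ ⊔ W₂)) ≤ 1 := by
    have := finrank_quotient_sup_add_two_le hL₁ hL₂ h₂₁.symm
    omega
  have hsup : W₁ ⊔ W₂ = H := eq_of_le_of_lt_top_of_finrank_quotient_le_one hcodim
    (sup_le (le_H hL₁ h₁) (le_H hL₂ h₂)) hH
  have hiso : IsTotallyIsotropic Q (W₁ ⊔ W₂) :=
    .sup_of_covBy hL₁ hL₂ hL₃ h₁ h₂ h₃ h₃₁.symm h₃₂.symm (hsup ▸ le_H hL₃ h₃)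
  have hrk_le := rank_le_finrank_quotient_add Q.polarBilin
    fun x hx y hy ↦ hiso.polarBilin_eq_zero hx hy
  exact hrk.not_ge (hrk_le.trans (mod_cast add_le_add hcodim hcodim))

/-- For a quadratic form of rank 3 or 4 on a 5-dimensional complex vector space and a
2-dimensional totally isotropic subspace `L` not contained in the radical, there are at
most two 3-dimensional totally isotropic subspaces containing `L`. -/
theorem at_most_two_totallyIsotropic_planes_through_line
    (V : Type*) [AddCommGroup V] [Module ℂ V] [FiniteDimensional ℂ V]
    (hV : Module.finrank ℂ V = 5) (Q : QuadraticForm ℂ V)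
    (hrk : Module.finrank ℂ V - Module.finrank ℂ ↥(LinearMap.ker Q.polarBilin) = 3 ∨
           Module.finrank ℂ V - Module.finrank ℂ ↥(LinearMap.ker Q.polarBilin) = 4)
    (L : Submodule ℂ V) (hL : Module.finrank ℂ ↥L = 2) (hLiso : ∀ x ∈ L, Q x = 0)
    (hLrad : ¬ L ≤ LinearMap.ker Q.polarBilin) :
    ∃ W₁ W₂ : Submodule ℂ V, ∀ W : Submodule ℂ V,
      Module.finrank ℂ ↥W = 3 → (∀ x ∈ W, Q x = 0) → L ≤ W → W = W₁ ∨ W = W₂ := by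
  have hrank : 2 < Q.polarBilin.rank := by
    have hadd := Q.polarBilin.finrank_range_add_finrank_ker
    have hlt : 2 < finrank ℂ (LinearMap.range Q.polarBilin) := by omega
    exact_mod_cast lt_rank_of_lt_finrank hlt
  have hcodim : finrank ℂ (V ⧸ L) ≤ 3 := by
    have := L.finrank_quotient_add_finrank
    omega
  obtain ⟨W₁, W₂, h⟩ :=
    at_most_two_totallyIsotropic_planes_through_line_general Q hrank L hcodim hLrad
  exact ⟨W₁, W₂, fun W hW hQ hLW ↦ h W (covBy_of_finrank_eq_add_one hLW (by omega)) hQ⟩
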